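/- arXiv:2512.15112 — 4 statements merged into one kernel-verified Lean document; each statement's English description precedes it below -/
import Mathlib

section
/- For every m ≥ 0, s > 0, and every measurable set A ⊆ ℝ, the accuracy of the classifier that predicts the first class on A and the second class on its complement, for the equal-prior binary problem with class-conditional laws N(m, s²) and N(−m, s²), is at most Φ(m/s); that is, ½·N(m, s²)(A) + ½·N(−m, s²)(ℝ∖A) ≤ Φ(m/s). Hence the Bayes (optimal) accuracy of this problem equals Φ(m/s). -/
/-!
The accuracy of the classifier with acceptance region `A` is half the integral of the function equal
to the density of `N(m, s²)` on `A` and to the density of `N(-m, s²)` on `Aᶜ`. Pointwise this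
function is largest when the larger density is always chosen, and for `m ≥ 0` the density of
`N(m, s²)` is the larger one exactly where `(x - m)² ≤ (x + m)²`, which holds on the half-line
`[0, ∞)`, with the reverse inequality on its complement. Hence `A = [0, ∞)` is optimal
(`accuracy_le_of_likelihood_ratio`, `gaussianPDF_neg_le_of_nonneg`, `gaussianPDF_le_neg_of_nonpos`).
Its accuracy is computed by pushing `N(0, 1)` forward along `x ↦ m - s x` and `x ↦ s x - m`: both
`N(m, s²)([0, ∞))` and `N(-m, s²)((-∞, 0))` equal `Φ(m / s)`.
-/

open MeasureTheory ProbabilityTheory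
open scoped ENNReal NNReal

/-- Neyman-Pearson for equal weights: choosing the larger of two densities at every point maximises
the total mass collected by a partition `A`, `Aᶜ`. -/
lemma accuracy_le_of_likelihood_ratio {α : Type*} [MeasurableSpace α] {μ : Measure α}
    {f g : α → ℝ≥0∞} {A H : Set α} (hA : MeasurableSet A) (hH : MeasurableSet H)
    (hgf : ∀ x ∈ H, g x ≤ f x) (hfg : ∀ x ∉ H, f x ≤ g x) :
    ∫⁻ x in A, f x ∂μ + ∫⁻ x in Aᶜ, g x ∂μ ≤ ∫⁻ x in H, f x ∂μ + ∫⁻ x in Hᶜ, g x ∂μ := by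
  classical
  rw [← lintegral_piecewise hA, ← lintegral_piecewise hH]
  refine lintegral_mono fun x => ?_
  by_cases hxA : x ∈ A <;> by_cases hxH : x ∈ H <;> simp [hxA, hxH, hgf, hfg]

lemma gaussianPDF_neg_le_of_nonneg {m x : ℝ} (v : ℝ≥0) (hm : 0 ≤ m) (hx : 0 ≤ x) :
    gaussianPDF (-m) v x ≤ gaussianPDF m v x := by
  refine ENNReal.ofReal_le_ofReal ?_
  simp only [gaussianPDFReal]
  gcongr _ * Real.exp (-?_ / _)
  nlinarith [mul_nonneg hm hx]

lemma gaussianPDF_le_neg_of_nonpos {m x : ℝ} (v : ℝ≥0) (hm : 0 ≤ m) (hx : x ≤ 0) :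
    gaussianPDF m v x ≤ gaussianPDF (-m) v x := by
  refine ENNReal.ofReal_le_ofReal ?_
  simp only [gaussianPDFReal]
  gcongr _ * Real.exp (-?_ / _)
  nlinarith [mul_nonneg hm (neg_nonneg.2 hx)]

/-- An affine image of the standard Gaussian measure. -/
lemma gaussianReal_eq_map_standard (a c : ℝ) :
    gaussianReal a (Real.toNNReal (c ^ 2)) = (gaussianReal 0 1).map (fun x => c * x + a) := by
  have h : (fun x : ℝ => c * x + a) = (fun x => x + a) ∘ (fun x => c * x) := rfl
  rw [h, ← Measure.map_map (by fun_prop) (by fun_prop), gaussianReal_map_const_mul,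
    gaussianReal_map_add_const]
  congr 1
  · simp
  · ext
    simp [Real.coe_toNNReal _ (sq_nonneg c)]

lemma gaussianReal_Ici_zero (m : ℝ) {s : ℝ} (hs : 0 < s) :
    gaussianReal m (Real.toNNReal (s ^ 2)) (Set.Ici 0) = gaussianReal 0 1 (Set.Iic (m / s)) := by
  -- The slope `-s`, rather than `s`, turns `[0, ∞)` into a lower half-line.
  rw [← neg_sq, gaussianReal_eq_map_standard, Measure.map_apply (by fun_prop) measurableSet_Ici]
  congr 1
  ext x
  simp only [Set.mem_preimage, Set.mem_Ici, Set.mem_Iic, le_div_iff₀ hs]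
  constructor <;> intro h <;> linarith

lemma gaussianReal_neg_Iio_zero (m : ℝ) {s : ℝ} (hs : 0 < s) :
    gaussianReal (-m) (Real.toNNReal (s ^ 2)) (Set.Iio 0) = gaussianReal 0 1 (Set.Iic (m / s)) := by
  have := nullSingletonClass_gaussianReal (μ := 0) (one_ne_zero : (1 : ℝ≥0) ≠ 0)
  rw [gaussianReal_eq_map_standard, Measure.map_apply (by fun_prop) measurableSet_Iio,
    ← measure_congr (Iio_ae_eq_Iic (a := m / s))]
  congr 1
  ext x
  simp only [Set.mem_preimage, Set.mem_Iio, lt_div_iff₀ hs]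
  constructor <;> intro h <;> linarith


/-- For every `m ≥ 0`, `s > 0`, and every measurable set `A ⊆ ℝ`,
the accuracy `½·N(m, s²)(A) + ½·N(−m, s²)(Aᶜ)` of the classifier that predicts
the first class on `A` and the second class on `Aᶜ` is at most `Φ(m/s)`; hence the
Bayes (optimal) accuracy of the equal-prior binary problem equals `Φ(m/s)`,
where `Φ(r) = N(0,1)((−∞, r])` is the standard Gaussian CDF. -/
theorem bayes_accuracy_eq (m s : ℝ) (hm : 0 ≤ m) (hs : 0 < s) :
    (∀ A : Set ℝ, MeasurableSet A →
        (1 / 2 : ℝ≥0∞) * gaussianReal m (Real.toNNReal (s ^ 2)) A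
            + (1 / 2 : ℝ≥0∞) * gaussianReal (-m) (Real.toNNReal (s ^ 2)) Aᶜ
          ≤ gaussianReal 0 1 (Set.Iic (m / s))) ∧
    (⨆ (A : Set ℝ) (_ : MeasurableSet A),
        (1 / 2 : ℝ≥0∞) * gaussianReal m (Real.toNNReal (s ^ 2)) A
            + (1 / 2 : ℝ≥0∞) * gaussianReal (-m) (Real.toNNReal (s ^ 2)) Aᶜ)
      = gaussianReal 0 1 (Set.Iic (m / s)) := by
  have hv : Real.toNNReal (s ^ 2) ≠ 0 := by simpa using hs.ne'
  have hopt : (1 / 2 : ℝ≥0∞) * gaussianReal m (Real.toNNReal (s ^ 2)) (Set.Ici 0)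
      + (1 / 2 : ℝ≥0∞) * gaussianReal (-m) (Real.toNNReal (s ^ 2)) (Set.Ici 0)ᶜ
      = gaussianReal 0 1 (Set.Iic (m / s)) := by
    rw [Set.compl_Ici, gaussianReal_Ici_zero m hs, gaussianReal_neg_Iio_zero m hs, ← add_mul,
      ENNReal.add_halves, one_mul]
  have hle : ∀ A : Set ℝ, MeasurableSet A →
      (1 / 2 : ℝ≥0∞) * gaussianReal m (Real.toNNReal (s ^ 2)) A
          + (1 / 2 : ℝ≥0∞) * gaussianReal (-m) (Real.toNNReal (s ^ 2)) Aᶜ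
        ≤ gaussianReal 0 1 (Set.Iic (m / s)) := by
    intro A hA
    rw [← hopt, ← mul_add, ← mul_add]
    simp only [gaussianReal_apply _ hv]
    gcongr 1 / 2 * ?_
    exact accuracy_le_of_likelihood_ratio hA measurableSet_Ici
      (fun x hx => gaussianPDF_neg_le_of_nonneg _ hm hx)
      (fun x hx => gaussianPDF_le_neg_of_nonpos _ hm (not_le.1 hx).le)
  refine ⟨hle, le_antisymm (iSup₂_le hle) ?_⟩
  rw [← hopt]
  exact le_iSup₂ (f := fun (A : Set ℝ) (_ : MeasurableSet A) =>
    (1 / 2 : ℝ≥0∞) * gaussianReal m (Real.toNNReal (s ^ 2)) A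
      + (1 / 2 : ℝ≥0∞) * gaussianReal (-m) (Real.toNNReal (s ^ 2)) Aᶜ) (Set.Ici 0) measurableSet_Ici
end

section
/- In the Gaussian neighborhood model, for every w ∈ [0,1], the class separability admits the closed form CS(w) = Φ(|m(w)| / √(v(w))), where m(w) = μ·(1 − 2w(n−n₀)/n) and v(w) = σ²·((1−w)² + w²/n). -/
/-!
For `a ≥ 0` and `v > 0`, the density of `N(a, v)` dominates that of `N(-a, v)` on `(0, ∞)`, and is
dominated by it on `(-∞, 0]`. Hence `A = (0, ∞)` maximises `N(a, v)(A) + N(-a, v)(Aᶜ)`, both terms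
being bounded by integrating the pointwise maximum of the two densities (`bayes_le`). By reflection
and standardisation each of the two terms at the maximiser equals `Φ(a / √v)`
(`gaussianReal_Ioi_zero`, `gaussianReal_neg_Iic_zero`). When `m(w) < 0` the roles of the two classes
are exchanged by passing to complements.
-/

open MeasureTheory ProbabilityTheory
open scoped ENNReal NNReal

/-- Mean `m(w) = μ·(1 − 2w(n−n₀)/n)` of the class-`C₀` embedding in the Gaussian
neighborhood model. -/
noncomputable def mW (μ : ℝ) (n n₀ : ℕ) (w : ℝ) : ℝ :=
  μ * (1 - 2 * w * ((n : ℝ) - n₀) / n)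

/-- Variance `v(w) = σ²·((1−w)² + w²/n)` of the embedding in the Gaussian
neighborhood model. -/
noncomputable def vW (σ : ℝ) (n : ℕ) (w : ℝ) : ℝ :=
  σ ^ 2 * ((1 - w) ^ 2 + w ^ 2 / n)

/-- Class-conditional embedding law `P₀(w) = N(m(w), v(w))` of a class-`C₀` node. -/
noncomputable def P0 (μ σ : ℝ) (n n₀ : ℕ) (w : ℝ) : Measure ℝ :=
  gaussianReal (mW μ n n₀ w) (Real.toNNReal (vW σ n w))

/-- Class-conditional embedding law `P₁(w) = N(−m(w), v(w))` of a class-`C₁` node. -/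
noncomputable def P1 (μ σ : ℝ) (n n₀ : ℕ) (w : ℝ) : Measure ℝ :=
  gaussianReal (-(mW μ n n₀ w)) (Real.toNNReal (vW σ n w))

/-- Class separability: one minus the Bayes error rate of the Bayes classifier
for equal class priors, i.e. the supremum over measurable sets `A ⊆ ℝ` of
`½·P₀(w)(A) + ½·P₁(w)(Aᶜ)`. -/
noncomputable def CS (μ σ : ℝ) (n n₀ : ℕ) (w : ℝ) : ℝ≥0∞ :=
  ⨆ (A : Set ℝ) (_ : MeasurableSet A),
    (1 / 2 : ℝ≥0∞) * P0 μ σ n n₀ w A + (1 / 2 : ℝ≥0∞) * P1 μ σ n n₀ w Aᶜ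

/-- Latent-class separability: the two-class Calinski–Harabasz-type index
`LCS(w) = (E_{P₀(w)}[x] − E_{P₁(w)}[x])² / (½·(Var_{P₀(w)}(x) + Var_{P₁(w)}(x)))`. -/
noncomputable def LCS (μ σ : ℝ) (n n₀ : ℕ) (w : ℝ) : ℝ :=
  ((∫ x, x ∂(P0 μ σ n n₀ w)) - ∫ x, x ∂(P1 μ σ n n₀ w)) ^ 2
    / ((variance id (P0 μ σ n n₀ w) + variance id (P1 μ σ n n₀ w)) / 2)

lemma gaussianPDF_neg_le {a : ℝ} (ha : 0 ≤ a) (v : ℝ≥0) {x : ℝ} (hx : 0 ≤ x) :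
    gaussianPDF (-a) v x ≤ gaussianPDF a v x := by
  unfold gaussianPDF gaussianPDFReal
  apply ENNReal.ofReal_le_ofReal
  have h : (x - a) ^ 2 ≤ (x - -a) ^ 2 := by nlinarith [mul_nonneg ha hx]
  gcongr

lemma gaussianPDF_le_neg {a : ℝ} (ha : 0 ≤ a) (v : ℝ≥0) {x : ℝ} (hx : x ≤ 0) :
    gaussianPDF a v x ≤ gaussianPDF (-a) v x := by
  unfold gaussianPDF gaussianPDFReal
  apply ENNReal.ofReal_le_ofReal
  have h : (x - -a) ^ 2 ≤ (x - a) ^ 2 := by nlinarith [mul_nonpos_of_nonpos_of_nonneg hx ha]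
  gcongr

/-- The half-line `(0, ∞)` is the Bayes decision region for `N(a, v)` against `N(-a, v)`. -/
lemma bayes_le {a : ℝ} (ha : 0 ≤ a) {v : ℝ≥0} (hv : v ≠ 0) {A : Set ℝ} (hA : MeasurableSet A) :
    gaussianReal a v A + gaussianReal (-a) v Aᶜ
      ≤ gaussianReal a v (Set.Ioi 0) + gaussianReal (-a) v (Set.Iic 0) := by
  simp only [gaussianReal_apply _ hv]
  calc
    _ ≤ (∫⁻ x in A, max (gaussianPDF a v x) (gaussianPDF (-a) v x))
        + ∫⁻ x in Aᶜ, max (gaussianPDF a v x) (gaussianPDF (-a) v x) := by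
      gcongr
      · exact le_max_left _ _
      · exact le_max_right _ _
    _ = (∫⁻ x in Set.Ioi 0, max (gaussianPDF a v x) (gaussianPDF (-a) v x))
        + ∫⁻ x in Set.Iic 0, max (gaussianPDF a v x) (gaussianPDF (-a) v x) := by
      rw [lintegral_add_compl _ hA, ← Set.compl_Ioi, lintegral_add_compl _ measurableSet_Ioi]
    _ = _ := by
      congr 1
      · exact setLIntegral_congr_fun measurableSet_Ioi
          fun x hx => max_eq_left (gaussianPDF_neg_le ha v (le_of_lt hx))
      · exact setLIntegral_congr_fun measurableSet_Iic
          fun x hx => max_eq_right (gaussianPDF_le_neg ha v hx)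

lemma gaussianReal_neg_Iic_zero (a : ℝ) {v : ℝ} (hv : 0 < v) :
    gaussianReal (-a) v.toNNReal (Set.Iic 0) = gaussianReal 0 1 (Set.Iic (a / √v)) := by
  have hs : 0 < √v := Real.sqrt_pos.2 hv
  have h : (gaussianReal (-a) v.toNNReal).map (fun x => (x + a) / √v) = gaussianReal 0 1 := by
    have hc : (fun x => (x + a) / √v) = (fun x => x / √v) ∘ fun x => x + a := rfl
    rw [hc, ← Measure.map_map (by fun_prop) (by fun_prop), gaussianReal_map_add_const, gaussianReal_map_div_const]
    congr 1
    · simp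
    · ext
      simp [Real.sq_sqrt hv.le, hv.le, hv.ne']
  rw [← h, Measure.map_apply (by fun_prop) measurableSet_Iic]
  congr 1
  ext x
  simp [div_le_div_iff_of_pos_right hs]

lemma gaussianReal_Ioi_zero (a : ℝ) {v : ℝ} (hv : 0 < v) :
    gaussianReal a v.toNNReal (Set.Ioi 0) = gaussianReal 0 1 (Set.Iic (a / √v)) := by
  have hv' : v.toNNReal ≠ 0 := by simpa using hv
  have := nullSingletonClass_gaussianReal (μ := -a) hv'
  have h : (gaussianReal (-a) v.toNNReal).map (fun x => -x) = gaussianReal a v.toNNReal := by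
    rw [gaussianReal_map_neg, neg_neg]
  rw [← gaussianReal_neg_Iic_zero a hv, ← h, Measure.map_apply (by fun_prop) measurableSet_Ioi]
  have hpre : (fun x : ℝ => -x) ⁻¹' Set.Ioi 0 = Set.Iio 0 := by ext x; simp
  rw [hpre]
  exact measure_congr Iio_ae_eq_Iic

/-- Closed form of the Bayes accuracy when the first class has the larger mean. -/
lemma iSup_bayes {a : ℝ} (ha : 0 ≤ a) {v : ℝ} (hv : 0 < v) :
    (⨆ (A : Set ℝ) (_ : MeasurableSet A),
      (1 / 2 : ℝ≥0∞) * gaussianReal a v.toNNReal A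
        + (1 / 2 : ℝ≥0∞) * gaussianReal (-a) v.toNNReal Aᶜ)
      = gaussianReal 0 1 (Set.Iic (a / √v)) := by
  have hmax : (1 / 2 : ℝ≥0∞) * gaussianReal a v.toNNReal (Set.Ioi 0)
      + (1 / 2 : ℝ≥0∞) * gaussianReal (-a) v.toNNReal (Set.Iic 0)
      = gaussianReal 0 1 (Set.Iic (a / √v)) := by
    rw [gaussianReal_Ioi_zero a hv, gaussianReal_neg_Iic_zero a hv, ← add_mul,
      ENNReal.add_halves, one_mul]
  refine le_antisymm (iSup₂_le fun A hA => ?_) ?_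
  · rw [← hmax, ← mul_add, ← mul_add]
    exact mul_le_mul_right (bayes_le ha (Real.toNNReal_pos.2 hv).ne' hA) _
  · rw [← hmax, ← Set.compl_Ioi]
    exact le_iSup₂_of_le (Set.Ioi 0) measurableSet_Ioi le_rfl

lemma vW_pos {σ : ℝ} (hσ : 0 < σ) {n : ℕ} (hn : 1 ≤ n) (w : ℝ) : 0 < vW σ n w := by
  have hn' : (0 : ℝ) < n := by exact_mod_cast hn
  refine mul_pos (by positivity) ?_
  rcases eq_or_ne w 0 with rfl | h
  · simp
  · positivity

/-- In the Gaussian neighborhood model, for every `w ∈ [0,1]`,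
the class separability admits the closed form `CS(w) = Φ(|m(w)| / √(v(w)))`,
where `Φ(r) = N(0,1)((−∞, r])` is the standard Gaussian CDF. -/
theorem CS_closed_form (μ σ : ℝ) (hμ : μ ≠ 0) (hσ : 0 < σ)
    (n n₀ : ℕ) (hn : 1 ≤ n) (hn₀ : n₀ ≤ n)
    (w : ℝ) (hw : w ∈ Set.Icc (0 : ℝ) 1) :
    CS μ σ n n₀ w = gaussianReal 0 1 (Set.Iic (|mW μ n n₀ w| / Real.sqrt (vW σ n w))) := by
  have hv := vW_pos hσ hn w
  unfold CS P0 P1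
  rcases le_total 0 (mW μ n n₀ w) with h | h
  · rw [abs_of_nonneg h]
    exact iSup_bayes h hv
  · rw [abs_of_nonpos h, ← iSup_bayes (neg_nonneg.2 h) hv, neg_neg]
    -- Replacing `A` by `Aᶜ` maps each classifier to one of equal accuracy with classes exchanged.
    apply le_antisymm
    · refine iSup₂_le fun A hA => le_iSup₂_of_le Aᶜ hA.compl ?_
      rw [compl_compl, add_comm]
    · refine iSup₂_le fun A hA => le_iSup₂_of_le Aᶜ hA.compl ?_
      rw [compl_compl, add_comm]
end

section
/- In the Gaussian neighborhood model, for all w, w' ∈ [0,1], CS(w) > CS(w') if and only if |m(w)|/√(v(w)) > |m(w')|/√(v(w')), where m(w) = μ·(1 − 2w(n−n₀)/n) and v(w) = σ²·((1−w)² + w²/n). -/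
/-!
The Bayes-optimal decision between `N(a, v)` and `N(-a, v)` with `a ≥ 0` and `v > 0` is the sign of
the observation, because the density of `N(a, v)` dominates that of `N(-a, v)` on the nonnegative
half-line and is dominated by it on the negative one (`pdf_neg_le`, `le_at_Ici`). Hence the
supremum defining the class separability is attained
at `[0, ∞)`. After standardization both halves of the attained value equal `Φ(a / √v)`, with `Φ` the
standard normal distribution function; swapping the classes covers `a < 0`, so that
`CS(w) = Φ(|m(w)| / √v(w))` (`separability_eq`). The theorem follows since `Φ` is strictly
increasing (`stdNormal_Iic_strictMono`).
-/

open MeasureTheory ProbabilityTheory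
open scoped ENNReal NNReal

/-- The separability of the laws `N(a, v)` and `N(-a, v)` with equal priors: the supremum of the
probability of correct classification over all measurable acceptance regions. -/
noncomputable def separability (a : ℝ) (v : ℝ≥0) : ℝ≥0∞ :=
  ⨆ (A : Set ℝ) (_ : MeasurableSet A),
    (1 / 2 : ℝ≥0∞) * gaussianReal a v A + (1 / 2 : ℝ≥0∞) * gaussianReal (-a) v Aᶜ

lemma stdNormal_Iic_strictMono : StrictMono fun t : ℝ => gaussianReal 0 1 (Set.Iic t) := by
  intro s t hst
  have hpos : gaussianReal 0 1 (Set.Ioc s t) ≠ 0 := by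
    intro h
    have h0 := gaussianReal_absolutelyContinuous' 0 one_ne_zero h
    rw [Real.volume_Ioc, ENNReal.ofReal_eq_zero] at h0
    linarith
  change gaussianReal 0 1 (Set.Iic s) < gaussianReal 0 1 (Set.Iic t)
  rw [← Set.Iic_union_Ioc_eq_Iic hst.le,
    measure_union (Set.Iic_disjoint_Ioc le_rfl) measurableSet_Ioc]
  exact ENNReal.lt_add_right (measure_ne_top _ _) hpos

lemma pdf_neg_le {a x : ℝ} (v : ℝ≥0) (h : 0 ≤ a * x) :
    gaussianPDF (-a) v x ≤ gaussianPDF a v x := by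
  unfold gaussianPDF gaussianPDFReal
  have : (x - a) ^ 2 ≤ (x - -a) ^ 2 := by nlinarith
  gcongr

/-- For `a ≥ 0` the acceptance region `[0, ∞)` is optimal. -/
lemma le_at_Ici {a : ℝ} {v : ℝ≥0} (hv : v ≠ 0) (ha : 0 ≤ a) {A : Set ℝ} (hA : MeasurableSet A) :
    gaussianReal a v A + gaussianReal (-a) v Aᶜ
      ≤ gaussianReal a v (Set.Ici 0) + gaussianReal (-a) v (Set.Ici 0)ᶜ := by
  have hI : MeasurableSet (Set.Ici (0 : ℝ)) := measurableSet_Ici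
  simp only [gaussianReal_apply _ hv]
  -- Every decision rule is bounded by the integral of the pointwise maximum of the two densities.
  calc _ ≤ (∫⁻ x in A, gaussianPDF a v x ⊔ gaussianPDF (-a) v x)
        + ∫⁻ x in Aᶜ, gaussianPDF a v x ⊔ gaussianPDF (-a) v x := by
        gcongr <;> simp
    _ = (∫⁻ x in Set.Ici 0, gaussianPDF a v x ⊔ gaussianPDF (-a) v x)
        + ∫⁻ x in (Set.Ici 0)ᶜ, gaussianPDF a v x ⊔ gaussianPDF (-a) v x := by
        rw [lintegral_add_compl _ hA, lintegral_add_compl _ hI]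
    _ = _ := by
        congr 1
        · refine setLIntegral_congr_fun hI fun x hx => ?_
          exact sup_eq_left.2 (pdf_neg_le v (mul_nonneg ha hx))
        · refine setLIntegral_congr_fun hI.compl fun x hx => ?_
          have hx : x < 0 := by simpa using hx
          have := pdf_neg_le (a := -a) (x := x) v (by nlinarith)
          exact sup_eq_right.2 (by simpa using this)

lemma gaussianReal_neg_Iio (a : ℝ) {v : ℝ≥0} (hv : v ≠ 0) :
    gaussianReal (-a) v (Set.Iio 0) = gaussianReal 0 1 (Set.Iic (a / √v)) := by
  have hs : 0 < √(v : ℝ) := Real.sqrt_pos.2 (by positivity)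
  have := nullSingletonClass_gaussianReal (μ := 0) (v := 1) one_ne_zero
  have hmap : gaussianReal (-a) v
      = ((gaussianReal 0 1).map (√(v : ℝ) * ·)).map (· + -a) := by
    rw [gaussianReal_map_const_mul, gaussianReal_map_add_const]
    congr 1
    · simp
    · ext; simp
  rw [hmap, Measure.map_map (by fun_prop) (by fun_prop),
    Measure.map_apply (by fun_prop) measurableSet_Iio, ← measure_congr Iio_ae_eq_Iic]
  congr 1
  ext x
  simp [lt_div_iff₀ hs, mul_comm]

lemma gaussianReal_Ici (a : ℝ) {v : ℝ≥0} (hv : v ≠ 0) :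
    gaussianReal a v (Set.Ici 0) = gaussianReal 0 1 (Set.Iic (a / √v)) := by
  have := nullSingletonClass_gaussianReal (μ := a) hv
  rw [← gaussianReal_neg_Iio a hv, ← gaussianReal_map_neg,
    Measure.map_apply (by fun_prop) measurableSet_Iio, ← measure_congr Ioi_ae_eq_Ici]
  congr 1
  ext x
  simp

lemma separability_eq_of_nonneg {a : ℝ} {v : ℝ≥0} (hv : v ≠ 0) (ha : 0 ≤ a) :
    separability a v = gaussianReal 0 1 (Set.Iic (a / √v)) := by
  have hval : (1 / 2 : ℝ≥0∞) * gaussianReal a v (Set.Ici 0)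
      + (1 / 2 : ℝ≥0∞) * gaussianReal (-a) v (Set.Ici 0)ᶜ
      = gaussianReal 0 1 (Set.Iic (a / √v)) := by
    rw [Set.compl_Ici, gaussianReal_Ici a hv, gaussianReal_neg_Iio a hv, ← add_mul,
      ENNReal.add_halves, one_mul]
  rw [← hval]
  refine le_antisymm (iSup₂_le fun A hA => ?_) ?_
  · rw [← mul_add, ← mul_add]
    exact mul_le_mul_right (le_at_Ici hv ha hA) _
  · exact le_iSup₂_of_le (Set.Ici 0) measurableSet_Ici le_rfl

lemma separability_le_neg (a : ℝ) (v : ℝ≥0) : separability a v ≤ separability (-a) v :=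
  -- Swapping the two classes amounts to complementing the acceptance region.
  iSup₂_le fun A hA => le_iSup₂_of_le Aᶜ hA.compl (by simp [add_comm])

lemma separability_eq (a : ℝ) {v : ℝ≥0} (hv : v ≠ 0) :
    separability a v = gaussianReal 0 1 (Set.Iic (|a| / √v)) := by
  have hneg : separability a v = separability (-a) v :=
    le_antisymm (separability_le_neg a v) (by simpa using separability_le_neg (-a) v)
  rcases abs_choice a with h | h
  · rw [← separability_eq_of_nonneg hv (abs_nonneg a), h]
  · rw [← separability_eq_of_nonneg hv (abs_nonneg a), h, hneg]

lemma CS_eq (μ : ℝ) {σ : ℝ} (hσ : 0 < σ) {n : ℕ} (hn : 1 ≤ n) (n₀ : ℕ) (w : ℝ) :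
    CS μ σ n n₀ w = gaussianReal 0 1 (Set.Iic (|mW μ n n₀ w| / √(vW σ n w))) := by
  have hv := vW_pos hσ hn w
  have h := separability_eq (mW μ n n₀ w) (Real.toNNReal_pos.2 hv).ne'
  rwa [Real.coe_toNNReal _ hv.le] at h

/-- In the Gaussian neighborhood model, for all `w, w' ∈ [0,1]`,
`CS(w) > CS(w')` if and only if `|m(w)|/√(v(w)) > |m(w')|/√(v(w'))`. -/
theorem CS_gt_iff (μ σ : ℝ) (hμ : μ ≠ 0) (hσ : 0 < σ)
    (n n₀ : ℕ) (hn : 1 ≤ n) (hn₀ : n₀ ≤ n)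
    (w w' : ℝ) (hw : w ∈ Set.Icc (0 : ℝ) 1) (hw' : w' ∈ Set.Icc (0 : ℝ) 1) :
    CS μ σ n n₀ w > CS μ σ n n₀ w'
      ↔ |mW μ n n₀ w| / Real.sqrt (vW σ n w) > |mW μ n n₀ w'| / Real.sqrt (vW σ n w') := by
  rw [CS_eq μ hσ hn, CS_eq μ hσ hn]
  exact stdNormal_Iic_strictMono.lt_iff_lt
end

section
/- Let n ≥ 1 and n₀ be natural numbers with n₀ ≤ n and 2n₀ < n. Then the function r(w) = (1 − 2w(n−n₀)/n) / √((1−w)² + w²/n) is strictly decreasing on the interval [0, 1]. -/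
/-! Put `c = (n - n₀) / n` and `k = 1 / n`, so that `c > 1 / 2`, `k > 0` and
`r(w) = (1 - 2 c w) / √D(w)` with `D(w) = (1 - w) ^ 2 + k w ^ 2 > 0`. In the derivative of `r`, the
terms quadratic in `w` cancel and
`r'(w) = ((1 - w) (1 - 2 c) - k w) / (D(w) √D(w))`,
whose numerator is negative for `0 < w < 1`. With continuity on `[0, 1]` this gives strict
monotonicity.
-/

lemma quad_pos {k : ℝ} (hk : 0 < k) (w : ℝ) : 0 < (1 - w) ^ 2 + k * w ^ 2 := by
  rcases eq_or_ne w 0 with rfl | hw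
  · norm_num
  · positivity

lemma hasDerivAt_ratio {c k : ℝ} (hk : 0 < k) (w : ℝ) :
    HasDerivAt (fun w : ℝ => (1 - 2 * c * w) / Real.sqrt ((1 - w) ^ 2 + k * w ^ 2))
      (((1 - w) * (1 - 2 * c) - k * w) /
        (((1 - w) ^ 2 + k * w ^ 2) * Real.sqrt ((1 - w) ^ 2 + k * w ^ 2))) w := by
  have hD := quad_pos hk w
  have hs := Real.sqrt_pos.2 hD
  have hsq := Real.sq_sqrt hD.le
  have hN : HasDerivAt (fun w : ℝ => 1 - 2 * c * w) (-(2 * c)) w := by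
    simpa using ((hasDerivAt_id w).const_mul (2 * c)).const_sub 1
  have hQ : HasDerivAt (fun w : ℝ => (1 - w) ^ 2 + k * w ^ 2) (-2 * (1 - w) + 2 * k * w) w := by
    refine ((((hasDerivAt_id w).const_sub 1).pow 2).add
      (((hasDerivAt_id w).pow 2).const_mul k)).congr_deriv ?_
    simp
    ring
  refine (hN.div (hQ.sqrt hD.ne') hs.ne').congr_deriv ?_
  rw [hsq, div_eq_div_iff hD.ne' (by positivity)]
  generalize Real.sqrt ((1 - w) ^ 2 + k * w ^ 2) = s at *
  field_simp
  rw [hsq]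
  ring

lemma strictAntiOn_ratio {c k : ℝ} (hc : 1 < 2 * c) (hk : 0 < k) :
    StrictAntiOn (fun w : ℝ => (1 - 2 * c * w) / Real.sqrt ((1 - w) ^ 2 + k * w ^ 2))
      (Set.Icc (0 : ℝ) 1) := by
  refine strictAntiOn_of_deriv_neg (convex_Icc 0 1)
    (fun w _ => (hasDerivAt_ratio hk w).continuousAt.continuousWithinAt) fun w hw => ?_
  rw [interior_Icc] at hw
  obtain ⟨h0, h1⟩ := hw
  rw [(hasDerivAt_ratio hk w).deriv]
  have hD := quad_pos hk w
  refine div_neg_of_neg_of_pos ?_ (mul_pos hD (Real.sqrt_pos.2 hD))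
  nlinarith [mul_pos (sub_pos.2 h1) (sub_pos.2 hc), mul_pos hk h0]

/-- For natural numbers `n ≥ 1` and `n₀ ≤ n` with `2n₀ < n`, the
function `r(w) = (1 − 2w(n−n₀)/n) / √((1−w)² + w²/n)` is strictly decreasing on
the interval `[0, 1]`. -/
theorem r_strictAntiOn (n n₀ : ℕ) (hn : 1 ≤ n) (hn₀ : n₀ ≤ n) (h : 2 * n₀ < n) :
    StrictAntiOn
      (fun w : ℝ =>
        (1 - 2 * w * ((n : ℝ) - n₀) / n) / Real.sqrt ((1 - w) ^ 2 + w ^ 2 / n))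
      (Set.Icc (0 : ℝ) 1) := by
  have hn' : (0 : ℝ) < n := by exact_mod_cast hn
  have h' : (2 : ℝ) * n₀ < n := by exact_mod_cast h
  have hc : 1 < 2 * (((n : ℝ) - n₀) / n) := by
    rw [← mul_div_assoc, one_lt_div hn']
    linarith
  convert strictAntiOn_ratio hc (inv_pos.2 hn') using 5 <;> ring
end
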